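/- arXiv:2407.04924 — 8 statements merged into one kernel-verified Lean document; each statement's English description precedes it below -/
import Mathlib

section
/- Let B be a finite structure in a finite relational signature. Then the following are equivalent: (i) B has a quasi Maltsev polymorphism and, for all n,k ≥ 1, a k-absorptive polymorphism of arity nk; (ii) B is homomorphically equivalent to a finite structure B' in the same signature that has a quasi Maltsev polymorphism and binary polymorphisms ⊔ and ⊓ such that (B', ⊔, ⊓) is a distributive lattice. -/
/-!
The quasi Maltsev condition is a system of height-one identities, so it passes from a structure to
any homomorphically equivalent one by conjugating with the two homomorphisms
(`exists_quasiMaltsev_of_homEquiv`). What remains concerns the absorptive polymorphisms only.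

*From the lattice to absorptive operations.* On a lattice, `⨆ i, ⨅ j, x i j` is absorptive, since
enlarging a block lowers its meet (`supInf_mono`); it is conjugated back to `B`.

*From absorptive operations to the lattice.* The generators `b ↦ {V | b ∈ V}` span the free
distributive lattice over `B` inside `Set (Set B)`. The new structure lives on `Set (Set B)`, and
its relations are the sublattices generated by the images of the relations of `B`, described in
disjunctive normal form by families of sets of tuples (`latStruct`). The map back to `B` sends
a join of meets of generators, presented by a matrix `x`, to `F (x, x)`, where `F` is an absorptive
polymorphism with twice as many blocks as `x` and with blocks long enough to exhaust `B`.
This is well defined (`eq_of_dnf_eq`): if `x` and `y` present the same lattice element, then every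
block of `y` contains one of `x` and conversely, and absorption against the half that is kept gives
`F (x, x) = F (x, ⊤) = F (x, y) = F (⊤, y) = F (y, y)`, where `⊤` has all blocks equal to `B`.
-/

structure RelStruct (σ : Type) (ar : σ → ℕ) (B : Type) where
  rel : ∀ s : σ, Set (Fin (ar s) → B)

/-- `h` is a homomorphism from the structure `SA` to the structure `SB`. -/
def IsHom {σ : Type} {ar : σ → ℕ} {A B : Type}
    (SA : RelStruct σ ar A) (SB : RelStruct σ ar B) (h : A → B) : Prop :=
  ∀ (s : σ) (t : Fin (ar s) → A), t ∈ SA.rel s → (fun i => h (t i)) ∈ SB.rel s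

/-- `f` is a polymorphism of `S` whose arguments are indexed by the type `I`
(for `I = Fin n × Fin k` this is a polymorphism of arity `n * k`). -/
def IsPolyIdx {σ : Type} {ar : σ → ℕ} {B : Type} (S : RelStruct σ ar B)
    {I : Type} (f : (I → B) → B) : Prop :=
  ∀ (s : σ) (t : I → Fin (ar s) → B),
    (∀ i, t i ∈ S.rel s) → (fun j => f fun i => t i j) ∈ S.rel s

/-- a ternary operation written in curried form is a polymorphism of `S`. -/
def IsPoly3 {σ : Type} {ar : σ → ℕ} {B : Type} (S : RelStruct σ ar B)
    (m : B → B → B → B) : Prop :=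
  ∀ (s : σ) (t₁ t₂ t₃ : Fin (ar s) → B), t₁ ∈ S.rel s → t₂ ∈ S.rel s → t₃ ∈ S.rel s →
    (fun j => m (t₁ j) (t₂ j) (t₃ j)) ∈ S.rel s

/-- a quasi Maltsev operation: `m x x y = m y x x = m y y y`. -/
def IsQuasiMaltsev {B : Type} (m : B → B → B → B) : Prop :=
  ∀ x y, m x x y = m y x x ∧ m y x x = m y y y

/-- An operation of arity `n * k` (arguments grouped into `n` blocks of length `k`,
presented as a matrix `Fin n → Fin k → B`) is `k`-block symmetric if its value only
depends on the multiset of sets of entries of the blocks. -/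
def BlockSym {B : Type} (n k : ℕ) (f : (Fin n → Fin k → B) → B) : Prop :=
  ∀ x y : Fin n → Fin k → B,
    Multiset.map (fun i => Set.range (x i)) Finset.univ.val =
      Multiset.map (fun i => Set.range (y i)) Finset.univ.val →
    f x = f y

/-- A `k`-block symmetric operation is `k`-absorptive if
`f(S₁,S₂,S₃,…,Sₙ) = f(S₂,S₂,S₃,…,Sₙ)` whenever `S₂ ⊆ S₁` (stated here for an
arbitrary pair of distinct blocks, which by block symmetry is equivalent). -/
def IsAbsorptive {B : Type} (n k : ℕ) (f : (Fin n → Fin k → B) → B) : Prop :=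
  BlockSym n k f ∧
  ∀ (x : Fin n → Fin k → B) (i j : Fin n), i ≠ j →
    Set.range (x j) ⊆ Set.range (x i) → f x = f (Function.update x i (x j))

/-- A block operation (matrix form `Fin n → Fin k → B`) is a polymorphism of arity
`n * k` of `S`, identifying `B^(n·k)` with `Fin n × Fin k → B`. -/
def IsBlockPoly {σ : Type} {ar : σ → ℕ} {B : Type} (S : RelStruct σ ar B)
    (n k : ℕ) (f : (Fin n → Fin k → B) → B) : Prop :=
  IsPolyIdx S (fun v : Fin n × Fin k → B => f fun i j => v (i, j))

/-! ### Transfer along homomorphic equivalence -/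

theorem exists_quasiMaltsev_of_homEquiv {σ : Type} {ar : σ → ℕ} {A B : Type}
    {SA : RelStruct σ ar A} {SB : RelStruct σ ar B} {h : A → B} {g : B → A}
    (hh : IsHom SA SB h) (hg : IsHom SB SA g)
    (H : ∃ m : A → A → A → A, IsQuasiMaltsev m ∧ IsPoly3 SA m) :
    ∃ m : B → B → B → B, IsQuasiMaltsev m ∧ IsPoly3 SB m := by
  obtain ⟨m, hm, hp⟩ := H
  refine ⟨fun x y z => h (m (g x) (g y) (g z)), fun x y => ?_, ?_⟩
  · exact ⟨congrArg h (hm _ _).1, congrArg h (hm _ _).2⟩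
  · intro s t₁ t₂ t₃ h₁ h₂ h₃
    exact hh s _ (hp s _ _ _ (hg s _ h₁) (hg s _ h₂) (hg s _ h₃))

/-! ### Absorptive operations on a lattice -/

/-- The join of the meets of the rows of a matrix. -/
def supInf {L I K : Type} [Lattice L] [Fintype I] [Nonempty I] [Fintype K] [Nonempty K]
    (x : I → K → L) : L :=
  Finset.univ.sup' Finset.univ_nonempty fun i =>
    Finset.univ.inf' Finset.univ_nonempty fun j => x i j

theorem supInf_mono {L I K : Type} [Lattice L] [Fintype I] [Nonempty I] [Fintype K] [Nonempty K]
    {x y : I → K → L} (h : ∀ i, ∃ i', Set.range (y i') ⊆ Set.range (x i)) :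
    supInf x ≤ supInf y := by
  refine Finset.sup'_le _ _ fun i _ => ?_
  obtain ⟨i', hi'⟩ := h i
  refine le_trans ?_ (Finset.le_sup' _ (Finset.mem_univ i'))
  refine Finset.le_inf' _ _ fun j _ => ?_
  obtain ⟨j', hj'⟩ := hi' ⟨j, rfl⟩
  rw [← hj']
  exact Finset.inf'_le _ (Finset.mem_univ j')

theorem supInf_mem {L I K : Type} [Lattice L] [Fintype I] [Nonempty I] [Fintype K] [Nonempty K]
    {r : ℕ} {R : Set (Fin r → L)} (hsup : ∀ t₁ ∈ R, ∀ t₂ ∈ R, t₁ ⊔ t₂ ∈ R)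
    (hinf : ∀ t₁ ∈ R, ∀ t₂ ∈ R, t₁ ⊓ t₂ ∈ R) (t : I → K → Fin r → L) (ht : ∀ i j, t i j ∈ R) :
    (fun p => supInf fun i j => t i j p) ∈ R := by
  have : (fun p => supInf fun i j => t i j p) = supInf t := by
    funext p
    simp only [supInf, Finset.sup'_apply, Finset.inf'_apply]
  rw [this]
  exact Finset.sup'_induction _ _ hsup fun i _ =>
    Finset.inf'_induction _ _ hinf fun j _ => ht i j

theorem exists_absorptive_of_lattice {σ : Type} {ar : σ → ℕ} {A B : Type} [Lattice A]
    {SA : RelStruct σ ar A} {SB : RelStruct σ ar B} {h : A → B} {g : B → A}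
    (hh : IsHom SA SB h) (hg : IsHom SB SA g)
    (hsup : ∀ s, ∀ t₁ ∈ SA.rel s, ∀ t₂ ∈ SA.rel s, t₁ ⊔ t₂ ∈ SA.rel s)
    (hinf : ∀ s, ∀ t₁ ∈ SA.rel s, ∀ t₂ ∈ SA.rel s, t₁ ⊓ t₂ ∈ SA.rel s)
    (n k : ℕ) (hn : 1 ≤ n) (hk : 1 ≤ k) :
    ∃ f : (Fin n → Fin k → B) → B, IsAbsorptive n k f ∧ IsBlockPoly SB n k f := by
  have : Nonempty (Fin n) := ⟨⟨0, hn⟩⟩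
  have : Nonempty (Fin k) := ⟨⟨0, hk⟩⟩
  have mono : ∀ x y : Fin n → Fin k → B, (∀ i, ∃ i', Set.range (y i') ⊆ Set.range (x i)) →
      supInf (fun i j => g (x i j)) ≤ supInf (fun i j => g (y i j)) := by
    intro x y hxy
    refine supInf_mono fun i => ?_
    obtain ⟨i', hi'⟩ := hxy i
    refine ⟨i', ?_⟩
    rintro _ ⟨j, rfl⟩
    obtain ⟨j', hj'⟩ := hi' ⟨j, rfl⟩
    exact ⟨j', congrArg g hj'⟩
  have key : ∀ x y : Fin n → Fin k → B,
      Multiset.map (fun i => Set.range (x i)) Finset.univ.val =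
        Multiset.map (fun i => Set.range (y i)) Finset.univ.val →
      ∀ i, ∃ i', Set.range (y i') ⊆ Set.range (x i) := by
    intro x y hxy i
    have hi : Set.range (x i) ∈ Multiset.map (fun i => Set.range (x i)) Finset.univ.val :=
      Multiset.mem_map_of_mem _ (Finset.mem_univ i)
    rw [hxy, Multiset.mem_map] at hi
    obtain ⟨i', -, hi'⟩ := hi
    exact ⟨i', hi'.le⟩
  refine ⟨fun x => h (supInf fun i j => g (x i j)), ⟨fun x y hxy => ?_, ?_⟩, ?_⟩
  · exact congrArg h (le_antisymm (mono _ _ (key x y hxy)) (mono _ _ (key y x hxy.symm)))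
  · intro x i j hij hx
    refine congrArg h (le_antisymm (mono _ _ fun a => ?_) (mono _ _ fun a => ?_))
    · by_cases ha : a = i
      · subst ha
        exact ⟨j, by rwa [Function.update_of_ne hij.symm]⟩
      · exact ⟨a, by rw [Function.update_of_ne ha]⟩
    · by_cases ha : a = i
      · subst ha
        exact ⟨j, by rw [Function.update_self]⟩
      · exact ⟨a, by rw [Function.update_of_ne ha]⟩
  · intro s t ht
    exact hh s _ (supInf_mem (hsup s) (hinf s) (fun i j p => g (t (i, j) p))
      fun i j => hg s _ (ht (i, j)))

/-! ### Absorption over arbitrary finite index types -/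

/-- The absorption law for block operations whose blocks are indexed by `I` and whose entries
within a block are indexed by `K`, in its symmetric form: block `i` may be exchanged for `y` if both
contain block `j`. -/
def BlockAbsorbs {B I K : Type} (F : (I → K → B) → B) : Prop :=
  ∀ (x : I → K → B) (y : K → B) (i j : I), i ≠ j → Set.range (x j) ⊆ Set.range (x i) →
    Set.range (x j) ⊆ Set.range y → F x = F (fun a b => open Classical in
      if a = i then y b else x a b)

theorem exists_absorbs {σ : Type} {ar : σ → ℕ} {B : Type} {S : RelStruct σ ar B}
    (H : ∀ n k : ℕ, 1 ≤ n → 1 ≤ k →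
      ∃ f : (Fin n → Fin k → B) → B, IsAbsorptive n k f ∧ IsBlockPoly S n k f)
    (I K : Type) [Finite I] [Nonempty I] [Finite K] [Nonempty K] :
    ∃ F : (I → K → B) → B, BlockAbsorbs F ∧
      ∀ (s : σ) (t : I → K → Fin (ar s) → B), (∀ i j, t i j ∈ S.rel s) →
        (fun p => F fun i j => t i j p) ∈ S.rel s := by
  obtain ⟨f, hf, hp⟩ := H (Nat.card I) (Nat.card K) Nat.card_pos Nat.card_pos
  let eI := Finite.equivFin I
  let eK := Finite.equivFin K
  refine ⟨fun x => f fun a b => x (eI.symm a) (eK.symm b), ?_, ?_⟩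
  · intro x y i j hij hx hy
    have hr : ∀ z : K → B, Set.range (fun b => z (eK.symm b)) = Set.range z := fun z =>
      eK.symm.surjective.range_comp z
    have hne : eI i ≠ eI j := fun h => hij (eI.injective h)
    have upd : ∀ z : K → B, (fun a b => open Classical in
        if eI.symm a = i then z (eK.symm b) else x (eI.symm a) (eK.symm b)) =
        Function.update (fun a b => x (eI.symm a) (eK.symm b)) (eI i)
          (fun b => z (eK.symm b)) := by
      intro z
      funext a b
      by_cases ha : a = eI i
      · subst ha
        simp
      · have : eI.symm a ≠ i := fun h => ha (by rw [← h]; simp)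
        simp [Function.update_of_ne ha, this]
    -- Both sides are absorbed to the matrix whose block `i` is `x j`.
    have h₁ := hf.2 (fun a b => x (eI.symm a) (eK.symm b)) (eI i) (eI j) hne
      (by simpa [hr] using hx)
    have h₂ := hf.2 (Function.update (fun a b => x (eI.symm a) (eK.symm b)) (eI i)
      (fun b => y (eK.symm b))) (eI i) (eI j) hne
      (by simpa [Function.update_of_ne hne.symm, hr] using hy)
    rw [Function.update_idem, Function.update_of_ne hne.symm] at h₂
    exact (h₁.trans h₂.symm).trans (congrArg f (upd y)).symm
  · intro s t ht
    exact hp s (fun q => t (eI.symm q.1) (eK.symm q.2)) fun q => ht _ _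

/-- Absorption in several blocks at once: a block may be exchanged whenever its old and its new
value both contain a common block that is not exchanged. -/
theorem BlockAbsorbs.eq_of_common {B I K : Type} [Finite I] {F : (I → K → B) → B} (hF : BlockAbsorbs F)
    {x y : I → K → B}
    (h : ∀ i, x i = y i ∨ ∃ j, x j = y j ∧ Set.range (x j) ⊆ Set.range (x i) ∧
      Set.range (x j) ⊆ Set.range (y i)) : F x = F y := by
  classical
  have := Fintype.ofFinite I
  have main : ∀ s : Finset I, F x = F (s.piecewise y x) := by
    intro s
    induction s using Finset.induction_on with
    | empty => simp
    | insert i s hi ih =>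
      rw [ih, Finset.piecewise_insert]
      have hzi : s.piecewise y x i = x i := Finset.piecewise_eq_of_notMem _ _ _ hi
      by_cases hxy : x i = y i
      · rw [← hxy, ← hzi, Function.update_eq_self]
      · obtain ⟨j, hj, hji, hjy⟩ := (h i).resolve_left hxy
        have hij : i ≠ j := by
          rintro rfl
          exact hxy hj
        have hzj : s.piecewise y x j = x j := by
          by_cases hjs : j ∈ s
          · rw [Finset.piecewise_eq_of_mem _ _ _ hjs, hj]
          · exact Finset.piecewise_eq_of_notMem _ _ _ hjs
        rw [hF (s.piecewise y x) (y i) i j hij (by rwa [hzj, hzi]) (by rwa [hzj])]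
        congr 1
        funext a b
        by_cases ha : a = i
        · subst ha
          simp
        · simp [ha]
  simpa using main Finset.univ

/-! ### The lattice structure -/

/-- The element `⨆ i, ⨅ j, x i j` of the free distributive lattice over `B`, where `b : B` is
identified with the set `{V | b ∈ V}`. -/
def dnf {B I K : Type} (x : I → K → B) : Set (Set B) := {V | ∃ i, ∀ j, x i j ∈ V}

theorem exists_subset_of_dnf_le {B I K : Type} {x y : I → K → B} (h : dnf y ⊆ dnf x) (i : I) :
    ∃ j, Set.range (x j) ⊆ Set.range (y i) := by
  obtain ⟨j, hj⟩ := h (show Set.range (y i) ∈ dnf y from ⟨i, fun j => ⟨j, rfl⟩⟩)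
  exact ⟨j, Set.range_subset_iff.2 hj⟩

theorem eq_of_dnf_eq {B I K : Type} [Finite I] {F : (I ⊕ I → K → B) → B} (hF : BlockAbsorbs F)
    {e : K → B} (he : Function.Surjective e) {x y : I → K → B} (h : dnf x = dnf y) :
    F (Sum.elim x x) = F (Sum.elim y y) := by
  have hxy := exists_subset_of_dnf_le h.le
  have hyx := exists_subset_of_dnf_le h.ge
  have hT : ∀ z : Set B, z ⊆ Set.range e := fun z b _ => he b
  calc F (Sum.elim x x) = F (Sum.elim x fun _ => e) := hF.eq_of_common (by
          rintro (i | i)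
          · exact Or.inl rfl
          · exact Or.inr ⟨Sum.inl i, rfl, subset_rfl, hT _⟩)
    _ = F (Sum.elim x y) := hF.eq_of_common (by
          rintro (i | i)
          · exact Or.inl rfl
          · obtain ⟨j, hj⟩ := hyx i
            exact Or.inr ⟨Sum.inl j, rfl, hT _, hj⟩)
    _ = F (Sum.elim (fun _ => e) y) := hF.eq_of_common (by
          rintro (i | i)
          · obtain ⟨j, hj⟩ := hxy i
            exact Or.inr ⟨Sum.inr j, rfl, hj, hT _⟩
          · exact Or.inl rfl)
    _ = F (Sum.elim y y) := hF.eq_of_common (by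
          rintro (i | i)
          · exact Or.inr ⟨Sum.inr i, rfl, hT _, subset_rfl⟩
          · exact Or.inl rfl)

/-- The structure on `Set (Set B)` whose relations are the sublattices generated by the relations
of `S`, where `b : B` is identified with `{V | b ∈ V}`. A tuple of such a sublattice is given in
disjunctive normal form by a nonempty family `W` of nonempty sets of tuples, standing for
`⨆ w ∈ W, ⨅ t ∈ w, t`. -/
def latStruct {σ : Type} {ar : σ → ℕ} {B : Type} (S : RelStruct σ ar B) :
    RelStruct σ ar (Set (Set B)) where
  rel s := {u | ∃ W : Set (Set (Fin (ar s) → B)), W.Nonempty ∧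
    (∀ w ∈ W, w.Nonempty ∧ w ⊆ S.rel s) ∧ ∀ p, u p = {V | ∃ w ∈ W, ∀ t ∈ w, t p ∈ V}}

theorem isHom_latStruct {σ : Type} {ar : σ → ℕ} {B : Type} (S : RelStruct σ ar B) :
    IsHom S (latStruct S) fun b => {V | b ∈ V} := by
  intro s t ht
  exact ⟨{{t}}, by simp, by simpa using ht, by simp⟩

theorem latStruct_sup {σ : Type} {ar : σ → ℕ} {B : Type} (S : RelStruct σ ar B) (s : σ)
    (t₁ t₂ : Fin (ar s) → Set (Set B)) (h₁ : t₁ ∈ (latStruct S).rel s)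
    (h₂ : t₂ ∈ (latStruct S).rel s) : (fun j => t₁ j ⊔ t₂ j) ∈ (latStruct S).rel s := by
  obtain ⟨W₁, hn₁, hW₁, e₁⟩ := h₁
  obtain ⟨W₂, hn₂, hW₂, e₂⟩ := h₂
  refine ⟨W₁ ∪ W₂, hn₁.inl, fun w hw => hw.elim (hW₁ w) (hW₂ w), fun p => ?_⟩
  ext V
  simp only [e₁, e₂, Set.sup_eq_union, Set.mem_union, Set.mem_ofPred_eq, or_and_right, exists_or]

theorem latStruct_inf {σ : Type} {ar : σ → ℕ} {B : Type} (S : RelStruct σ ar B) (s : σ)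
    (t₁ t₂ : Fin (ar s) → Set (Set B)) (h₁ : t₁ ∈ (latStruct S).rel s)
    (h₂ : t₂ ∈ (latStruct S).rel s) : (fun j => t₁ j ⊓ t₂ j) ∈ (latStruct S).rel s := by
  obtain ⟨W₁, hn₁, hW₁, e₁⟩ := h₁
  obtain ⟨W₂, hn₂, hW₂, e₂⟩ := h₂
  refine ⟨Set.image2 (· ∪ ·) W₁ W₂, hn₁.image2 hn₂, ?_, fun p => ?_⟩
  · rintro _ ⟨w₁, hw₁, w₂, hw₂, rfl⟩
    exact ⟨(hW₁ w₁ hw₁).1.inl, Set.union_subset (hW₁ w₁ hw₁).2 (hW₂ w₂ hw₂).2⟩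
  · ext V
    simp only [e₁, e₂, Set.inf_eq_inter, Set.mem_inter_iff, Set.mem_ofPred_eq]
    constructor
    · rintro ⟨⟨w₁, hw₁, h₁⟩, w₂, hw₂, h₂⟩
      exact ⟨w₁ ∪ w₂, ⟨w₁, hw₁, w₂, hw₂, rfl⟩, fun t ht => ht.elim (h₁ t) (h₂ t)⟩
    · rintro ⟨_, ⟨w₁, hw₁, w₂, hw₂, rfl⟩, h⟩
      exact ⟨⟨w₁, hw₁, fun t ht => h t (Or.inl ht)⟩, w₂, hw₂, fun t ht => h t (Or.inr ht)⟩

theorem exists_range_eq {K A : Type} {q : K → A} (hq : Function.Surjective q) {W : Set A}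
    (hW : W.Nonempty) : ∃ e : K → A, Set.range e = W := by
  classical
  obtain ⟨w, hw⟩ := hW
  refine ⟨fun k => if q k ∈ W then q k else w, Set.Subset.antisymm ?_ fun a ha => ?_⟩
  · rintro _ ⟨k, rfl⟩
    dsimp only
    split_ifs with hk
    exacts [hk, hw]
  · obtain ⟨k, rfl⟩ := hq a
    exact ⟨k, if_pos ha⟩

theorem exists_isHom_of_latStruct {σ : Type} [Finite σ] {ar : σ → ℕ} {B : Type} [Finite B]
    [Nonempty B] {S : RelStruct σ ar B}
    (H : ∀ n k : ℕ, 1 ≤ n → 1 ≤ k →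
      ∃ f : (Fin n → Fin k → B) → B, IsAbsorptive n k f ∧ IsBlockPoly S n k f) :
    ∃ g, IsHom (latStruct S) S g := by
  classical
  -- Index types large enough to enumerate, for every symbol `s` at once, any family of sets of
  -- `ar s`-tuples, any set of `ar s`-tuples, and all of `B`.
  let I := ∀ s, Set (Fin (ar s) → B)
  let K := (∀ s, Fin (ar s) → B) × B
  obtain ⟨F, hF, hp⟩ := exists_absorbs H (I ⊕ I) K
  have hsnd : Function.Surjective (Prod.snd : K → B) := Prod.snd_surjective
  let g : Set (Set B) → B := fun U =>
    if h : ∃ x : I → K → B, dnf x = U then F (Sum.elim h.choose h.choose)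
    else Classical.arbitrary B
  have hg : ∀ x : I → K → B, g (dnf x) = F (Sum.elim x x) := by
    intro x
    have h : ∃ y : I → K → B, dnf y = dnf x := ⟨x, rfl⟩
    simp only [g, dif_pos h]
    exact eq_of_dnf_eq hF hsnd h.choose_spec
  refine ⟨g, ?_⟩
  rintro s u ⟨W, hWn, hW, hu⟩
  obtain ⟨e, rfl⟩ := exists_range_eq (K := I) (Function.surjective_eval s) hWn
  have hd : ∀ i, ∃ d : K → Fin (ar s) → B, Set.range d = e i := fun i =>
    exists_range_eq (q := fun k : K => k.1 s)
      ((Function.surjective_eval s).comp Prod.fst_surjective) (hW _ ⟨i, rfl⟩).1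
  choose d hd using hd
  have hdS : ∀ i j, d i j ∈ S.rel s := fun i j =>
    (hW _ ⟨i, rfl⟩).2 (by rw [← hd i]; exact ⟨j, rfl⟩)
  have hu' : ∀ p, u p = dnf fun i j => d i j p := by
    intro p
    rw [hu p]
    ext V
    simp [dnf, ← hd]
  have := hp s (Sum.elim d d) (by rintro (i | i) j <;> exact hdS i j)
  convert this using 2 with p
  rw [hu' p, hg]
  congr 1
  funext a
  cases a <;> rfl

/-- Theorem: a finite structure `B` in a finite relational signature has a quasi
Maltsev polymorphism and `k`-absorptive polymorphisms of arity `n * k` for all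
`n, k ≥ 1` if and only if `B` is homomorphically equivalent to a finite structure `B'`
in the same signature that has a quasi Maltsev polymorphism and binary polymorphisms
`⊔` and `⊓` making `B'` a distributive lattice. -/
theorem quasiMaltsev_and_absorptive_iff_homEquiv_lattice
    {σ : Type} [Fintype σ] {ar : σ → ℕ} {B : Type} [Fintype B]
    (S : RelStruct σ ar B) :
    ((∃ m : B → B → B → B, IsQuasiMaltsev m ∧ IsPoly3 S m) ∧
      ∀ n k : ℕ, 1 ≤ n → 1 ≤ k →
        ∃ f : (Fin n → Fin k → B) → B, IsAbsorptive n k f ∧ IsBlockPoly S n k f) ↔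
    (∃ (B' : Type) (_ : Fintype B') (S' : RelStruct σ ar B'),
      (∃ h, IsHom S S' h) ∧ (∃ h, IsHom S' S h) ∧
      (∃ m : B' → B' → B' → B', IsQuasiMaltsev m ∧ IsPoly3 S' m) ∧
      ∃ L : DistribLattice B',
        (∀ (s : σ) (t₁ t₂ : Fin (ar s) → B'), t₁ ∈ S'.rel s → t₂ ∈ S'.rel s →
          (fun j => L.sup (t₁ j) (t₂ j)) ∈ S'.rel s) ∧
        (∀ (s : σ) (t₁ t₂ : Fin (ar s) → B'), t₁ ∈ S'.rel s → t₂ ∈ S'.rel s →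
          (fun j => L.inf (t₁ j) (t₂ j)) ∈ S'.rel s)) := by
  constructor
  · rintro ⟨hm, H⟩
    rcases isEmpty_or_nonempty B with hB | hB
    · -- `Set (Set B)` admits no map to an empty `B`, so `B` itself serves as the lattice.
      let L : DistribLattice B :=
        { sup := fun a _ => a
          inf := fun a _ => a
          le := fun _ _ => True
          le_refl := fun a => isEmptyElim a
          le_trans := fun a => isEmptyElim a
          le_antisymm := fun a => isEmptyElim a
          le_sup_left := fun a => isEmptyElim a
          le_sup_right := fun a => isEmptyElim a
          sup_le := fun a => isEmptyElim a
          inf_le_left := fun a => isEmptyElim a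
          inf_le_right := fun a => isEmptyElim a
          le_inf := fun a => isEmptyElim a
          le_sup_inf := fun a => isEmptyElim a }
      exact ⟨B, inferInstance, S, ⟨id, fun _ _ h => h⟩, ⟨id, fun _ _ h => h⟩, hm, L,
        fun _ _ _ h _ => h, fun _ _ _ h _ => h⟩
    · obtain ⟨g, hg⟩ := exists_isHom_of_latStruct H
      exact ⟨Set (Set B), Fintype.ofFinite _, latStruct S, ⟨_, isHom_latStruct S⟩, ⟨g, hg⟩,
        exists_quasiMaltsev_of_homEquiv (isHom_latStruct S) hg hm, inferInstance,
        latStruct_sup S, latStruct_inf S⟩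
  · rintro ⟨B', _, S', ⟨g, hg⟩, ⟨h, hh⟩, hm, L, hsup, hinf⟩
    exact ⟨exists_quasiMaltsev_of_homEquiv hh hg hm, exists_absorptive_of_lattice hh hg
      (fun s t₁ h₁ t₂ h₂ => hsup s t₁ t₂ h₁ h₂) (fun s t₁ h₁ t₂ h₂ => hinf s t₁ t₂ h₁ h₂)⟩
end

section
/- Let B be a finite structure in a finite relational signature and let F be a class of finite structures of the same signature such that (F, B) is a duality pair. Let F' := {F ∈ F : F is injective}. Then (F', B) is a duality pair. -/
/-- A structure is injective if every tuple in one of its relations has pairwise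
distinct entries. -/
def InjectiveStruct {σ : Type} {ar : σ → ℕ} {A : Type} (S : RelStruct σ ar A) : Prop :=
  ∀ (s : σ) (t : Fin (ar s) → A), t ∈ S.rel s → Function.Injective t

/-- `(F, B)` is a duality pair: a finite structure `A` has a homomorphism to `B`
iff no member of the class `F` of finite structures has a homomorphism to `A`. -/
def DualityPair {σ : Type} {ar : σ → ℕ}
    (F : ∀ A : Type, Fintype A → RelStruct σ ar A → Prop)
    {B : Type} (SB : RelStruct σ ar B) : Prop :=
  ∀ (A : Type) (iA : Fintype A) (SA : RelStruct σ ar A),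
    (∃ h, IsHom SA SB h) ↔
      ∀ (C : Type) (iC : Fintype C) (SC : RelStruct σ ar C),
        F C iC SC → ¬ ∃ h, IsHom SC SA h

/-- The blow-up of a structure by an index type `I`: every element is replaced by `I` copies, and
the relations are the injective tuples lying over tuples of the original structure. -/
def RelStruct.blowup {σ : Type} {ar : σ → ℕ} {A : Type} (S : RelStruct σ ar A) (I : Type) :
    RelStruct σ ar (A × I) where
  rel s := {t | Function.Injective t ∧ (fun i => (t i).1) ∈ S.rel s}

theorem InjectiveStruct.of_isHom {σ : Type} {ar : σ → ℕ} {A C : Type}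
    {SC : RelStruct σ ar C} {SA : RelStruct σ ar A} (hA : InjectiveStruct SA)
    {h : C → A} (hh : IsHom SC SA h) : InjectiveStruct SC := by
  intro s t ht
  exact Function.Injective.of_comp (f := h) (hA s _ (hh s t ht))

/-- If there are more than `|B| * m` copies of each element, where `m` bounds the arities, then a
homomorphism from the blow-up to `B` gives one from the original structure. -/
theorem exists_hom_of_blowup {σ : Type} {ar : σ → ℕ} {A B I : Type} [Fintype B] [Fintype I]
    (SA : RelStruct σ ar A) (SB : RelStruct σ ar B) (m : ℕ) (hm : ∀ s, ar s ≤ m)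
    (hI : Fintype.card B * m < Fintype.card I)
    {h : A × I → B} (hh : IsHom (SA.blowup I) SB h) : ∃ g, IsHom SA SB g := by
  classical
  -- `b` is a popular value on the copies of `a`; `e` lists `m` distinct copies taking it.
  have key : ∀ a : A, ∃ (b : B) (e : Fin m → I),
      Function.Injective e ∧ ∀ j, h (a, e j) = b := by
    intro a
    obtain ⟨b, hb⟩ := Fintype.exists_lt_card_fiber_of_mul_lt_card (fun n : I => h (a, n)) hI
    obtain ⟨u, hu, hcard⟩ := Finset.exists_subset_card_eq hb.le
    let e := (u.equivFinOfCardEq hcard).symm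
    refine ⟨b, fun j => (e j : I), Subtype.val_injective.comp e.injective, fun j => ?_⟩
    exact (Finset.mem_filter.1 (hu (e j).2)).2
  choose g e he hg using key
  refine ⟨g, fun s t ht => ?_⟩
  -- The `i`-th entry is lifted to its `i`-th popular copy, so equal entries get distinct lifts.
  have hlift := hh s (fun i => (t i, e (t i) (Fin.castLE (hm s) i))) ⟨?_, ht⟩
  · simpa only [hg] using hlift
  · intro i j hij
    obtain ⟨h1, h2⟩ := Prod.mk.inj hij
    rw [h1] at h2
    exact Fin.castLE_injective (hm s) (he _ h2)

/-- Theorem: if `(F, B)` is a duality pair, then so is `(F', B)`, where `F'` consists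
of the injective members of `F`. -/
theorem dualityPair_restrict_injective {σ : Type} [Fintype σ] {ar : σ → ℕ}
    {B : Type} [Fintype B] (SB : RelStruct σ ar B)
    (F : ∀ A : Type, Fintype A → RelStruct σ ar A → Prop)
    (hF : DualityPair F SB) :
    DualityPair (fun C iC SC => F C iC SC ∧ InjectiveStruct SC) SB := by
  intro A iA SA
  constructor
  · intro hAB C iC SC hC
    exact (hF A iA SA).1 hAB C iC SC hC.1
  · intro hno
    let m := ∑ s, ar s
    have hm : ∀ s, ar s ≤ m := fun s =>
      Finset.single_le_sum (f := ar) (fun _ _ => Nat.zero_le _) (Finset.mem_univ s)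
    let I := Fin (Fintype.card B * m + 1)
    have hblow : ∃ h, IsHom (SA.blowup I) SB h := by
      refine (hF (A × I) inferInstance (SA.blowup I)).2 ?_
      rintro C iC SC hC ⟨h, hh⟩
      have hinj : InjectiveStruct (SA.blowup I) := fun s t ht => ht.1
      exact hno C iC SC ⟨hC, hinj.of_isHom hh⟩
        ⟨fun c => (h c).1, fun s t ht => (hh s t ht).2⟩
    obtain ⟨h, hh⟩ := hblow
    exact exists_hom_of_blowup SA SB m hm (by simp [I]) hh
end

section
/- Let n ≥ 1 and let G = (V, E) be a finite directed graph. Then there exists a homomorphism from G to the transitive tournament T_n = ({1,…,n}, <) if and only if there is no sequence a_0, a_1, …, a_n of vertices of G (not necessarily distinct) with (a_{i-1}, a_i) ∈ E for all 1 ≤ i ≤ n; equivalently, if and only if there is no homomorphism from the directed path P_{n+1} to G. In other words, ({P_{n+1}}, T_n) is a duality pair. -/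
/-!
A homomorphism to `T_n` strictly increases along edges, so a walk with `n + 1` vertices would
give a strictly increasing map from `Fin (n + 1)` to `Fin n`, which is impossible. Conversely, if
there is no walk of length `n`, send each vertex to the length of the longest walk ending there:
this is at most `n - 1`, and an edge `u → v` prolongs any walk ending at `u` to a longer
one ending at `v` (`EndsWalk.step`), so the length strictly increases along edges.
Homomorphisms from `P_{n+1}` are exactly walks of length `n` (`pathD_hom_iff_walk`).
-/


/-- `h` is a homomorphism of directed graphs from `(V, E)` to `(W, F)`. -/
def DigraphHom {V W : Type} (E : V → V → Prop) (F : W → W → Prop) (h : V → W) : Prop :=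
  ∀ a b, E a b → F (h a) (h b)

/-- The edge relation of the directed path `P_n` with `n` vertices `0, …, n-1` and
edges `i → i+1`. -/
def pathD (n : ℕ) : Fin n → Fin n → Prop := fun a b => (b : ℕ) = (a : ℕ) + 1

/-- There is a walk of length `k` in `E` ending at `v`. The walk is encoded as an infinite sequence
of which only the entries `0, …, k` matter. -/
def EndsWalk {V : Type} (E : V → V → Prop) (v : V) (k : ℕ) : Prop :=
  ∃ a : ℕ → V, a k = v ∧ ∀ i < k, E (a i) (a (i + 1))

theorem EndsWalk.zero {V : Type} (E : V → V → Prop) (v : V) : EndsWalk E v 0 :=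
  ⟨fun _ => v, rfl, fun _ h => absurd h (Nat.not_lt_zero _)⟩

theorem EndsWalk.step {V : Type} {E : V → V → Prop} {u v : V} {k : ℕ}
    (h : EndsWalk E u k) (huv : E u v) : EndsWalk E v (k + 1) := by
  obtain ⟨a, rfl, ha⟩ := h
  refine ⟨fun i => if i ≤ k then a i else v, by simp, fun i hi => ?_⟩
  rcases Nat.lt_succ_iff_lt_or_eq.mp hi with hlt | rfl
  · have h1 : i ≤ k := hlt.le
    have h2 : i + 1 ≤ k := hlt
    simpa [h1, h2] using ha i hlt
  · simpa using huv

theorem exists_hom_iff_no_walk (n : ℕ) (hn : 1 ≤ n) (V : Type) (E : V → V → Prop) :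
    (∃ h : V → Fin n, DigraphHom E (· < ·) h) ↔
      ¬ ∃ a : Fin (n + 1) → V, ∀ i : Fin n, E (a i.castSucc) (a i.succ) := by
  classical
  constructor
  · rintro ⟨h, hh⟩ ⟨a, ha⟩
    have hmono : StrictMono (h ∘ a) :=
      Fin.strictMono_iff_lt_succ.mpr fun i => hh _ _ (ha i)
    have := Fintype.card_le_of_injective _ hmono.injective
    simp at this
  · intro hno
    have hno' : ∀ v, ¬ EndsWalk E v n := by
      rintro v ⟨a, -, ha⟩
      exact hno ⟨fun i => a i, fun i => ha i i.isLt⟩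
    have hle : ∀ v, Nat.findGreatest (EndsWalk E v) (n - 1) ≤ n - 1 :=
      fun v => Nat.findGreatest_le _
    refine ⟨fun v => ⟨Nat.findGreatest (EndsWalk E v) (n - 1), by have := hle v; omega⟩,
      fun u v huv => ?_⟩
    have hu : EndsWalk E u (Nat.findGreatest (EndsWalk E u) (n - 1)) :=
      Nat.findGreatest_spec (Nat.zero_le _) (EndsWalk.zero E u)
    have hv := hu.step huv
    have hne : Nat.findGreatest (EndsWalk E u) (n - 1) + 1 ≠ n := by
      intro heq
      rw [heq] at hv
      exact hno' v hv
    have hlen : Nat.findGreatest (EndsWalk E u) (n - 1) + 1 ≤ n - 1 := by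
      have := hle u
      omega
    exact Fin.mk_lt_mk.mpr (Nat.le_findGreatest hlen hv)

theorem pathD_hom_iff_walk (n : ℕ) (V : Type) (E : V → V → Prop) (a : Fin (n + 1) → V) :
    DigraphHom (pathD (n + 1)) E a ↔ ∀ i : Fin n, E (a i.castSucc) (a i.succ) := by
  constructor
  · intro h i
    exact h _ _ (by simp [pathD])
  · intro h x y hxy
    have hxy' : (y : ℕ) = x + 1 := hxy
    have hx : (x : ℕ) < n := by have := y.isLt; omega
    have hy : y = Fin.succ ⟨x, hx⟩ := Fin.ext hxy'
    rw [hy]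
    exact h ⟨x, hx⟩

/-- Theorem: a finite digraph `G` has a homomorphism to the transitive tournament
`T_n = (Fin n, <)` iff there is no directed walk `a₀ → a₁ → ⋯ → aₙ` of length `n` in
`G`, iff there is no homomorphism from the directed path `P_{n+1}` to `G`; i.e.,
`({P_{n+1}}, T_n)` is a duality pair. -/
theorem transitive_tournament_duality (n : ℕ) (hn : 1 ≤ n)
    (V : Type) [Fintype V] (E : V → V → Prop) :
    ((∃ h : V → Fin n, DigraphHom E (· < ·) h) ↔
      ¬ ∃ a : Fin (n + 1) → V, ∀ i : Fin n, E (a i.castSucc) (a i.succ)) ∧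
    ((∃ h : V → Fin n, DigraphHom E (· < ·) h) ↔
      ¬ ∃ g : Fin (n + 1) → V, DigraphHom (pathD (n + 1)) E g) := by
  refine ⟨exists_hom_iff_no_walk n hn V E, ?_⟩
  simp only [pathD_hom_iff_walk]
  exact exists_hom_iff_no_walk n hn V E
end

section
/- For every n ≥ 3, the transitive tournament T_n = ({1,…,n}, <) has no quasi Maltsev polymorphism; that is, there is no ternary operation m on {1,…,n} satisfying m(x,x,y) = m(y,x,x) = m(y,y,y) for all x,y and such that a < a', b < b', c < c' together imply m(a,b,c) < m(a',b',c'). -/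
/-- Theorem: for every `n ≥ 3`, the transitive tournament `T_n = (Fin n, <)` has no
quasi Maltsev polymorphism: there is no ternary operation `m` on `Fin n` satisfying
`m x x y = m y x x = m y y y` for all `x, y` and preserving the strict order
coordinatewise. -/
theorem transitive_tournament_no_quasiMaltsev (n : ℕ) (hn : 3 ≤ n) :
    ¬ ∃ m : Fin n → Fin n → Fin n → Fin n,
        (∀ x y, m x x y = m y x x ∧ m y x x = m y y y) ∧
        (∀ a a' b b' c c' : Fin n,
          a < a' → b < b' → c < c' → m a b c < m a' b' c') := by
  rintro ⟨m, hm, hlt⟩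
  let u : Fin n := ⟨0, by omega⟩
  let v : Fin n := ⟨1, by omega⟩
  let w : Fin n := ⟨2, by omega⟩
  have huv : u < v := Fin.mk_lt_mk.mpr (by norm_num)
  have hvw : v < w := Fin.mk_lt_mk.mpr (by norm_num)
  -- Both `m u u v` and `m v w w` equal `m v v v`, yet `(u, u, v) < (v, w, w)` coordinatewise.
  have h : m u u v < m v w w := hlt u v u w v w huv (huv.trans hvw) hvw
  rw [(hm u v).1, (hm u v).2, (hm w v).2] at h
  exact lt_irrefl _ h
end

section
/- Let n ≥ 2 and let B_n be the structure with domain {0,1}, unary relation O^{B_n} = {0} and n-ary relation R^{B_n} = {0,1}^n \ {(0,…,0)}. Then B_n has no quasi Maltsev polymorphism; moreover, if n ≥ 3, then B_n also has no quasi majority polymorphism. -/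
/-- a quasi majority operation: `m x x y = m x y x = m y x x = m x x x`. -/
def IsQuasiMajority {B : Type} (m : B → B → B → B) : Prop :=
  ∀ x y, m x x y = m x y x ∧ m x y x = m y x x ∧ m y x x = m x x x

/-- a ternary operation on `{0,1}` is a polymorphism of the structure `B_n` with
`O = {0}` and `R = {0,1}ⁿ \ {(0,…,0)}`. -/
def PreservesBn (n : ℕ) (m : Fin 2 → Fin 2 → Fin 2 → Fin 2) : Prop :=
  m 0 0 0 = 0 ∧
  ∀ t₁ t₂ t₃ : Fin n → Fin 2,
    (¬ ∀ i, t₁ i = 0) → (¬ ∀ i, t₂ i = 0) → (¬ ∀ i, t₃ i = 0) →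
    ¬ ∀ i, m (t₁ i) (t₂ i) (t₃ i) = 0

/-- Theorem: for `n ≥ 2` the structure `B_n` has no quasi Maltsev polymorphism, and
for `n ≥ 3` it also has no quasi majority polymorphism. -/
theorem bn_no_quasiMaltsev_no_quasiMajority (n : ℕ) (hn : 2 ≤ n) :
    (¬ ∃ m, PreservesBn n m ∧ IsQuasiMaltsev m) ∧
    (3 ≤ n → ¬ ∃ m, PreservesBn n m ∧ IsQuasiMajority m) := by
  constructor
  · rintro ⟨m, ⟨h0, h⟩, hm⟩
    have h1 := hm 1 0
    refine h (fun i => if i.val = 0 then 1 else 0) (fun _ => 1)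
      (fun i => if i.val = 0 then 0 else 1) ?_ ?_ ?_ ?_
    · intro H
      simpa using H ⟨0, by omega⟩
    · intro H
      simpa using H ⟨0, by omega⟩
    · intro H
      simpa using H ⟨1, by omega⟩
    · intro i
      by_cases hi : i.val = 0
      · simp only [hi, if_true]
        rw [h1.1, h1.2, h0]
      · simp only [hi, if_false]
        rw [h1.2, h0]
  · rintro hn3 ⟨m, ⟨h0, h⟩, hm⟩
    obtain ⟨h1, h2, h3⟩ := hm 0 1
    refine h (fun i => if i.val = 0 then 1 else 0) (fun i => if i.val = 1 then 1 else 0)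
      (fun i => if i.val = 2 then 1 else 0) ?_ ?_ ?_ ?_
    · intro H
      simpa using H ⟨0, by omega⟩
    · intro H
      simpa using H ⟨1, by omega⟩
    · intro H
      simpa using H ⟨2, by omega⟩
    · intro i
      split_ifs <;> omega
end

section
/- Let B be a finite nonempty structure in a finite relational signature whose relations all have arity at most m, where m ≥ 1. Set k₀ := m·|B| and n₀ := m·C(|B|, ⌊|B|/2⌋) (a binomial coefficient). Then B has a k-absorptive polymorphism of arity nk for all n,k ≥ 1 if and only if B has a k₀-absorptive polymorphism of arity n₀k₀. -/
/-- The families of sets of entries of the blocks of `x` and of `y` have the same upward closure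
under inclusion. -/
def SameUp {B ι κ ι' κ' : Type} (x : ι → κ → B) (y : ι' → κ' → B) : Prop :=
  (∀ i, ∃ i', Set.range (y i') ⊆ Set.range (x i)) ∧
  (∀ i', ∃ i, Set.range (x i) ⊆ Set.range (y i'))

lemma SameUp.symm {B ι κ ι' κ' : Type} {x : ι → κ → B} {y : ι' → κ' → B}
    (h : SameUp x y) : SameUp y x := ⟨h.2, h.1⟩

lemma SameUp.trans {B ι κ ι' κ' ι'' κ'' : Type} {x : ι → κ → B} {y : ι' → κ' → B}
    {z : ι'' → κ'' → B} (h : SameUp x y) (h' : SameUp y z) : SameUp x z := by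
  constructor
  · intro i
    obtain ⟨j, hj⟩ := h.1 i
    obtain ⟨l, hl⟩ := h'.1 j
    exact ⟨l, hl.trans hj⟩
  · intro i
    obtain ⟨j, hj⟩ := h'.2 i
    obtain ⟨l, hl⟩ := h.2 j
    exact ⟨l, hl.trans hj⟩

lemma SameUp.refl {B ι κ : Type} (x : ι → κ → B) : SameUp x x :=
  ⟨fun i => ⟨i, subset_rfl⟩, fun i => ⟨i, subset_rfl⟩⟩

/-- Replacing a block `i` that contains another block `j` by anything containing block `j` does
not change the upward closure. -/
lemma sameUp_update {B κ : Type} {n : ℕ} (x : Fin n → κ → B) {i j : Fin n} (hij : i ≠ j)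
    (h : Set.range (x j) ⊆ Set.range (x i)) (z : κ → B)
    (hz : Set.range (x j) ⊆ Set.range z) : SameUp x (Function.update x i z) := by
  constructor
  · intro l
    by_cases hl : l = i
    · subst hl
      exact ⟨j, by rw [Function.update_of_ne hij.symm]; exact h⟩
    · exact ⟨l, by rw [Function.update_of_ne hl]⟩
  · intro l
    by_cases hl : l = i
    · subst hl
      exact ⟨j, by rw [Function.update_self]; exact hz⟩
    · exact ⟨l, by rw [Function.update_of_ne hl]⟩

/-- A block matrix is normalized if every block containing another block is all of `B`. -/
def IsNormalized {B κ : Type} {n : ℕ} (x : Fin n → κ → B) : Prop :=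
  ∀ i j : Fin n, i ≠ j → Set.range (x j) ⊆ Set.range (x i) → Set.range (x i) = Set.univ

lemma IsAbsorptive.update_full {B : Type} {n k : ℕ} {f : (Fin n → Fin k → B) → B}
    (hf : IsAbsorptive n k f) (u : Fin k → B) (hu : Set.range u = Set.univ)
    (x : Fin n → Fin k → B) {i j : Fin n} (hij : i ≠ j)
    (h : Set.range (x j) ⊆ Set.range (x i)) : f x = f (Function.update x i u) := by
  rw [hf.2 x i j hij h, hf.2 (Function.update x i u) i j hij (by simp [hu])]
  simp [Function.update_of_ne hij.symm]

lemma IsAbsorptive.exists_normalized {B : Type} {n k : ℕ} {f : (Fin n → Fin k → B) → B}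
    (hf : IsAbsorptive n k f) (u : Fin k → B) (hu : Set.range u = Set.univ)
    (x : Fin n → Fin k → B) :
    ∃ y : Fin n → Fin k → B, f x = f y ∧ SameUp x y ∧ IsNormalized y := by
  classical
  -- Each enlargement lowers the number of blocks different from `B`.
  induction hN : (Finset.univ.filter fun i => Set.range (x i) ≠ Set.univ).card
    using Nat.strong_induction_on generalizing x with
  | _ N ih =>
    by_cases hx : IsNormalized x
    · exact ⟨x, rfl, SameUp.refl x, hx⟩
    · unfold IsNormalized at hx
      push Not at hx
      obtain ⟨i, j, hij, hsub, hne⟩ := hx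
      obtain ⟨y, hy1, hy2, hy3⟩ := ih _ (by
        rw [← hN]
        apply Finset.card_lt_card
        rw [Finset.ssubset_iff_of_subset]
        · exact ⟨i, by simpa using hne, by simp [hu]⟩
        · intro l hl
          by_cases hli : l = i
          · subst hli; simpa using hne
          · simpa [Function.update_of_ne hli] using hl) (Function.update x i u) rfl
      exact ⟨y, (hf.update_full u hu x hij hsub).trans hy1,
        (sameUp_update x hij hsub u (by simp [hu])).trans hy2, hy3⟩

lemma IsNormalized.mem_of_sameUp {B : Type} {n k : ℕ} {x y : Fin n → Fin k → B}
    (hx : IsNormalized x) (h : SameUp x y) {A : Set B} (hA : A ≠ Set.univ)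
    (hAx : ∃ i, Set.range (x i) = A) : ∃ i, Set.range (y i) = A := by
  obtain ⟨i, rfl⟩ := hAx
  obtain ⟨i', hi'⟩ := h.1 i
  obtain ⟨l, hl⟩ := h.2 i'
  by_cases hli : i = l
  · subst hli
    exact ⟨i', hi'.antisymm hl⟩
  · exact absurd (hx i l hli (hl.trans hi')) hA

lemma IsNormalized.nodup {B : Type} {n k : ℕ} {x : Fin n → Fin k → B}
    (hx : IsNormalized x) [DecidablePred fun A : Set B => A ≠ Set.univ] :
    ((Multiset.map (fun i => Set.range (x i)) Finset.univ.val).filter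
      (fun A => A ≠ Set.univ)).Nodup := by
  rw [Multiset.filter_map]
  apply Multiset.Nodup.map_on
  · intro i hi j _ hij
    by_contra hne
    exact (Multiset.mem_filter.1 hi).2 (hx i j hne hij.ge)
  · exact Finset.univ.nodup.filter _

lemma IsNormalized.multiset_eq {B : Type} {n k : ℕ} {x y : Fin n → Fin k → B}
    (hx : IsNormalized x) (hy : IsNormalized y) (h : SameUp x y) :
    Multiset.map (fun i => Set.range (x i)) Finset.univ.val =
      Multiset.map (fun i => Set.range (y i)) Finset.univ.val := by
  classical
  set X := Multiset.map (fun i => Set.range (x i)) Finset.univ.val with hX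
  set Y := Multiset.map (fun i => Set.range (y i)) Finset.univ.val with hY
  have h1 : X.filter (fun A => A ≠ Set.univ) = Y.filter (fun A => A ≠ Set.univ) := by
    refine (Multiset.Nodup.ext hx.nodup hy.nodup).2 fun A => ?_
    simp only [Multiset.mem_filter, Multiset.mem_map, Finset.mem_val, Finset.mem_univ,
      true_and]
    constructor
    · rintro ⟨hA, hne⟩
      exact ⟨hx.mem_of_sameUp h hne hA, hne⟩
    · rintro ⟨hA, hne⟩
      exact ⟨hy.mem_of_sameUp h.symm hne hA, hne⟩
  have hcard : X.card = Y.card := by simp [hX, hY]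
  -- The remaining members all equal `univ`, and their number is forced by the total `n`.
  have h2 : X.filter (fun A => ¬ A ≠ Set.univ) = Y.filter (fun A => ¬ A ≠ Set.univ) := by
    have e : ∀ Z : Multiset (Set B), Z.filter (fun A => ¬ A ≠ Set.univ) =
        Multiset.replicate (Z.filter (fun A => ¬ A ≠ Set.univ)).card Set.univ := by
      intro Z
      rw [Multiset.eq_replicate_card]
      intro A hA
      simpa using (Multiset.mem_filter.1 hA).2
    rw [e X, e Y]
    congr 1
    have a := congrArg Multiset.card (Multiset.filter_add_not (fun A => A ≠ Set.univ) X)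
    have b := congrArg Multiset.card (Multiset.filter_add_not (fun A => A ≠ Set.univ) Y)
    rw [Multiset.card_add] at a b
    have c := congrArg Multiset.card h1
    omega
  rw [← Multiset.filter_add_not (fun A => A ≠ Set.univ) X,
    ← Multiset.filter_add_not (fun A => A ≠ Set.univ) Y, h1, h2]

/-- If blocks are long enough to enumerate `B`, the value of an absorptive operation depends only
on the upward closure of the family of blocks. -/
lemma IsAbsorptive.eq_of_sameUp {B : Type} {n k : ℕ} {f : (Fin n → Fin k → B) → B}
    (hf : IsAbsorptive n k f) (u : Fin k → B) (hu : Set.range u = Set.univ)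
    {x y : Fin n → Fin k → B} (h : SameUp x y) : f x = f y := by
  obtain ⟨x', hx1, hx2, hx3⟩ := hf.exists_normalized u hu x
  obtain ⟨y', hy1, hy2, hy3⟩ := hf.exists_normalized u hu y
  rw [hx1, hy1]
  exact hf.1 _ _ (hx3.multiset_eq hy3 ((hx2.symm.trans h).trans hy2))

lemma exists_fin_cover {α γ : Type} [Nonempty α] [Fintype γ] (h : γ → α) {N : ℕ}
    (hN : Fintype.card γ ≤ N) : ∃ a : Fin N → α, ∀ c, ∃ i, a i = h c := by
  classical
  let e : γ ↪ Fin N := (Fintype.equivFin γ).toEmbedding.trans (Fin.castLEEmb hN)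
  exact ⟨Function.extend e h fun _ => Classical.arbitrary α,
    fun c => ⟨e c, e.injective.extend_apply h _ c⟩⟩

/-- A row of `r`-tuples has `m * |B|` entries realizing all its values in every coordinate. -/
lemma exists_entries {B κ : Type} [Fintype B] [Nonempty κ] {r m : ℕ} (hr : r ≤ m)
    (v : Fin r → κ → B) :
    ∃ b : Fin (m * Fintype.card B) → κ, ∀ p,
      Set.range (fun j => v p (b j)) = Set.range (v p) := by
  classical
  obtain ⟨b, hb⟩ := exists_fin_cover (N := m * Fintype.card B)
    (fun c : Fin r × B => if h : ∃ j, v c.1 j = c.2 then h.choose else Classical.arbitrary κ)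
    (by simpa using Nat.mul_le_mul_right _ hr)
  refine ⟨b, fun p => Set.Subset.antisymm ?_ ?_⟩
  · rintro _ ⟨j, rfl⟩
    exact ⟨b j, rfl⟩
  · rintro _ ⟨j, rfl⟩
    obtain ⟨i, hi⟩ := hb (p, v p j)
    have hex : ∃ j', v p j' = v p j := ⟨j, rfl⟩
    refine ⟨i, ?_⟩
    simp only [hi, hex, dif_pos]
    exact hex.choose_spec

/-- Sperner's theorem bounds the number of rows needed to meet all minimal sets in each of `r`
families of sets indexed by the rows. -/
lemma exists_rows {B ι : Type} [Fintype B] [Fintype ι] [Nonempty ι] {r m : ℕ} (hr : r ≤ m)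
    (F : Fin r → ι → Set B) :
    ∃ a : Fin (m * (Fintype.card B).choose (Fintype.card B / 2)) → ι,
      ∀ p i, ∃ i', F p (a i') ⊆ F p i := by
  classical
  let G : Fin r → ι → Finset B := fun p i => (F p i).toFinset
  let M : Fin r → Finset (Finset B) := fun p =>
    (Finset.univ.image (G p)).filter fun A => Minimal (fun A' => A' ∈ Finset.univ.image (G p)) A
  have hM : ∀ p, (M p).card ≤ (Fintype.card B).choose (Fintype.card B / 2) := by
    intro p
    apply IsAntichain.sperner
    intro A hA A' hA' hne hle
    have h1 := (Finset.mem_filter.1 hA)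
    have h2 := (Finset.mem_filter.1 hA').2
    exact hne (h2.eq_of_le h1.1 hle)
  have hrep : ∀ c : (Σ p : Fin r, {A // A ∈ M p}), ∃ i, G c.1 i = c.2.1 := by
    rintro ⟨p, A, hA⟩
    simpa using (Finset.mem_filter.1 hA).1
  choose h hh using hrep
  obtain ⟨a, ha⟩ := exists_fin_cover
    (N := m * (Fintype.card B).choose (Fintype.card B / 2)) h (by
      rw [Fintype.card_sigma]
      calc ∑ p : Fin r, Fintype.card {A // A ∈ M p}
          ≤ ∑ _p : Fin r, (Fintype.card B).choose (Fintype.card B / 2) :=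
            Finset.sum_le_sum fun p _ => by simpa using hM p
        _ = r * (Fintype.card B).choose (Fintype.card B / 2) := by simp
        _ ≤ _ := Nat.mul_le_mul_right _ hr)
  refine ⟨a, fun p i => ?_⟩
  obtain ⟨A, hle, hA⟩ := (Finset.univ.image (G p)).exists_le_minimal
    (Finset.mem_image_of_mem (G p) (Finset.mem_univ i))
  obtain ⟨i', hi'⟩ := ha ⟨p, A, Finset.mem_filter.2 ⟨hA.1, hA⟩⟩
  refine ⟨i', ?_⟩
  have h3 : G p (a i') ⊆ G p i := by
    rw [hi']
    exact (hh ⟨p, A, _⟩).le.trans hle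
  simpa [G] using h3

/-- A matrix of `r`-tuples, `r ≤ m`, has a submatrix (repetitions allowed) of the bounded size
with the same upward closure in each coordinate. -/
lemma exists_submatrix {B : Type} [Fintype B] {n k r m : ℕ} (hn : 1 ≤ n) (hk : 1 ≤ k)
    (hr : r ≤ m) (t : Fin n → Fin k → Fin r → B) :
    ∃ (a : Fin (m * (Fintype.card B).choose (Fintype.card B / 2)) → Fin n)
      (b : Fin (m * (Fintype.card B).choose (Fintype.card B / 2)) →
        Fin (m * Fintype.card B) → Fin k),
      ∀ p, SameUp (fun i j => t i j p) (fun i j => t (a i) (b i j) p) := by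
  have : Nonempty (Fin n) := ⟨⟨0, hn⟩⟩
  have : Nonempty (Fin k) := ⟨⟨0, hk⟩⟩
  obtain ⟨a, ha⟩ := exists_rows hr fun p i => Set.range fun j => t i j p
  choose b hb using fun i => exists_entries hr fun p j => t (a i) j p
  refine ⟨a, b, fun p => ⟨fun i => ?_, fun i => ⟨a i, (hb i p).ge⟩⟩⟩
  obtain ⟨l, hl⟩ := ha p i
  exact ⟨l, (hb l p).le.trans hl⟩

/-- Theorem: let `B` be a finite nonempty structure in a finite relational signature
whose relations all have arity at most `m`, `m ≥ 1`. With `k₀ := m * |B|` and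
`n₀ := m * C(|B|, ⌊|B|/2⌋)`, the structure `B` has `k`-absorptive polymorphisms of
arity `n * k` for all `n, k ≥ 1` iff it has a `k₀`-absorptive polymorphism of arity
`n₀ * k₀`. -/
theorem absorptive_iff_absorptive_bounded
    {σ : Type} [Fintype σ] {ar : σ → ℕ} {B : Type} [Fintype B] [Nonempty B]
    (S : RelStruct σ ar B) (m : ℕ) (hm : 1 ≤ m) (har : ∀ s, ar s ≤ m) :
    (∀ n k : ℕ, 1 ≤ n → 1 ≤ k →
        ∃ f : (Fin n → Fin k → B) → B, IsAbsorptive n k f ∧ IsBlockPoly S n k f) ↔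
    ∃ f : (Fin (m * (Fintype.card B).choose (Fintype.card B / 2)) →
            Fin (m * Fintype.card B) → B) → B,
      IsAbsorptive (m * (Fintype.card B).choose (Fintype.card B / 2))
        (m * Fintype.card B) f ∧
      IsBlockPoly S (m * (Fintype.card B).choose (Fintype.card B / 2))
        (m * Fintype.card B) f := by
  constructor
  · intro h
    exact h _ _ (Nat.mul_pos hm (Nat.choose_pos (Nat.div_le_self _ _)))
      (Nat.mul_pos hm Fintype.card_pos)
  · rintro ⟨f, hf, hpoly⟩ n k hn hk
    obtain ⟨u, hu⟩ : ∃ u : Fin (m * Fintype.card B) → B, Set.range u = Set.univ := by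
      obtain ⟨u, hu⟩ := exists_fin_cover (N := m * Fintype.card B) (id : B → B)
        (Nat.le_mul_of_pos_left _ hm)
      exact ⟨u, Set.range_eq_univ.2 hu⟩
    have hex : ∀ x : Fin n → Fin k → B,
        ∃ y : Fin (m * (Fintype.card B).choose (Fintype.card B / 2)) →
          Fin (m * Fintype.card B) → B, SameUp x y := by
      intro x
      obtain ⟨a, b, hab⟩ := exists_submatrix hn hk hm fun i j (_ : Fin 1) => x i j
      exact ⟨_, hab 0⟩
    choose Y hY using hex
    have key : ∀ x x' : Fin n → Fin k → B, SameUp x x' → f (Y x) = f (Y x') := fun x x' h =>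
      hf.eq_of_sameUp u hu (((hY x).symm.trans h).trans (hY x'))
    refine ⟨fun x => f (Y x), ⟨?_, ?_⟩, ?_⟩
    · intro x y hxy
      apply key
      have hmem : ∀ A : Set B, (∃ i, Set.range (x i) = A) ↔ ∃ i, Set.range (y i) = A := by
        intro A
        simpa using congrArg (fun Z => A ∈ Z) hxy
      constructor
      · intro i
        obtain ⟨i', hi'⟩ := (hmem _).1 ⟨i, rfl⟩
        exact ⟨i', hi'.le⟩
      · intro i
        obtain ⟨i', hi'⟩ := (hmem _).2 ⟨i, rfl⟩
        exact ⟨i', hi'.le⟩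
    · intro x i j hij h
      exact key _ _ (sameUp_update x hij h (x j) subset_rfl)
    · intro s t ht
      obtain ⟨a, b, hab⟩ := exists_submatrix hn hk (har s) fun i j p => t (i, j) p
      have h := hpoly s (fun q => t (a q.1, b q.1 q.2)) fun q => ht _
      convert h using 1
      funext p
      exact hf.eq_of_sameUp u hu ((hY _).symm.trans (hab p))
end

section
/- Let B be a set, let R ⊆ B × B be a binary relation, and let m : B^3 → B be a quasi Maltsev operation that preserves R, i.e. (a,a'), (b,b'), (c,c') ∈ R imply (m(a,b,c), m(a',b',c')) ∈ R. Define e(x) := m(x,x,x). Then for all a, b, x, y ∈ B, if (a,x) ∈ R, (b,x) ∈ R and (b,y) ∈ R, then (e(a), e(y)) ∈ R. In particular, whenever (a,b) ∈ R ∘ R⁻¹ ∘ R, also (e(a), e(b)) ∈ R. -/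
/-- Theorem: let `R` be a binary relation on `B` preserved by a quasi Maltsev
operation `m`, and let `e x := m x x x`. If `(a,x) ∈ R`, `(b,x) ∈ R` and
`(b,y) ∈ R`, then `(e a, e y) ∈ R`; in particular, `(a,b) ∈ R ∘ R⁻¹ ∘ R` implies
`(e a, e b) ∈ R`. -/
theorem quasiMaltsev_zigzag (B : Type) (R : B → B → Prop) (m : B → B → B → B)
    (hqm : ∀ x y, m x x y = m y x x ∧ m y x x = m y y y)
    (hpres : ∀ a a' b b' c c',
      R a a' → R b b' → R c c' → R (m a b c) (m a' b' c')) :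
    (∀ a b x y, R a x → R b x → R b y → R (m a a a) (m y y y)) ∧
    (∀ a b, (∃ x y, R a x ∧ R y x ∧ R y b) → R (m a a a) (m b b b)) := by
  have key : ∀ a b x y, R a x → R b x → R b y → R (m a a a) (m y y y) := by
    intro a b x y hax hbx hby
    -- `m` applied to the pairs `(a,x)`, `(b,x)`, `(b,y)` gives `(m a b b, m x x y) = (e a, e y)`.
    have h := hpres a x b x b y hax hbx hby
    rwa [(hqm b a).2, (hqm x y).1, (hqm x y).2] at h
  exact ⟨key, fun a b ⟨x, y, hax, hyx, hyb⟩ => key a y x b hax hyx hyb⟩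
end

section
/- Let n ≥ 1 and let R ⊆ {0,1}^n be closed under coordinatewise ∧ and coordinatewise ∨ (i.e. x, y ∈ R imply x ∧ y ∈ R and x ∨ y ∈ R, computed coordinatewise). Then there exist sets Z, O ⊆ {1,…,n} and P ⊆ {1,…,n} × {1,…,n} such that R = { x ∈ {0,1}^n : x_i = 0 for all i ∈ Z, x_i = 1 for all i ∈ O, and x_i ≤ x_j for all (i,j) ∈ P }. In particular, every Boolean relation preserved by ∨ and ∧ is definable by a CNF formula that is both Horn and dual Horn. -/
/-!
Take for `Z`, `O` and `P` all constraints of the three kinds that hold throughout `R`. If `x`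
satisfies them, then for every pair `(i, j)` some `r i j ∈ R` is `1` at `i` in case `x i = 1` and
is `0` at `j` in case `x j = 0`, since otherwise `R` would satisfy a constraint violated by `x`.
Hence `x = ⋁ i, ⋀ j, r i j`, which lies in `R` by closure. The index set is nonempty, so these are
joins and meets of nonempty families; if `R` is empty, then `Z` and `O` are both everything and no
`x` satisfies the constraints.
-/

/-- Theorem: every Boolean relation `R ⊆ {0,1}ⁿ` closed under coordinatewise `∧` and
coordinatewise `∨` is cut out by constraints of the forms `x i = 0`, `x i = 1` and
`x i ≤ x j`; in particular it is definable by a CNF formula that is both Horn and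
dual Horn. -/
theorem lattice_closed_boolean_relation (n : ℕ) (hn : 1 ≤ n)
    (R : Set (Fin n → Bool))
    (hand : ∀ x ∈ R, ∀ y ∈ R, (fun i => x i && y i) ∈ R)
    (hor : ∀ x ∈ R, ∀ y ∈ R, (fun i => x i || y i) ∈ R) :
    ∃ (Z O : Set (Fin n)) (P : Set (Fin n × Fin n)),
      R = {x : Fin n → Bool |
        (∀ i ∈ Z, x i = false) ∧ (∀ i ∈ O, x i = true) ∧
        ∀ p ∈ P, x p.1 ≤ x p.2} := by
  refine ⟨{i | ∀ r ∈ R, r i = false}, {i | ∀ r ∈ R, r i = true},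
    {p | ∀ r ∈ R, r p.1 ≤ r p.2}, Set.Subset.antisymm ?_ ?_⟩
  · exact fun x hx => ⟨fun i hi => hi x hx, fun i hi => hi x hx, fun p hp => hp x hx⟩
  rintro x ⟨hZ, hO, hP⟩
  have sep : ∀ i j, ∃ r ∈ R, (x i = true → r i = true) ∧ (x j = false → r j = false) := by
    intro i j
    have hz := hZ i
    have hoi := hO i
    have hoj := hO j
    have hp := hP (i, j)
    simp only [Set.mem_ofPred_eq, Bool.le_iff_imp] at hz hoi hoj hp
    by_contra! h
    cases hi : x i <;> cases hj : x j <;> simp_all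
  choose r hrR hr1 hr0 using sep
  have : Nonempty (Fin n) := ⟨⟨0, hn⟩⟩
  have hinf : InfClosed R := fun a ha b hb => hand a ha b hb
  have hsup : SupClosed R := fun a ha b hb => hor a ha b hb
  have hmem : Finset.univ.sup' Finset.univ_nonempty
      (fun i => Finset.univ.inf' Finset.univ_nonempty (fun j => r i j)) ∈ R :=
    hsup.finsetSup'_mem _ fun i _ => hinf.finsetInf'_mem _ fun j _ => hrR i j
  convert hmem using 1
  funext k
  rw [Finset.sup'_apply]
  simp only [Finset.inf'_apply]
  apply le_antisymm
  · cases hk : x k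
    · exact Bool.false_le _
    · refine le_trans ?_ (Finset.le_sup' _ (Finset.mem_univ k))
      exact Finset.le_inf' _ _ fun j _ => (hr1 k j hk).ge
  · cases hk : x k
    · exact Finset.sup'_le _ _ fun i _ =>
        (Finset.inf'_le _ (Finset.mem_univ k)).trans (hr0 i k hk).le
    · exact Bool.le_true _
end
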